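/- arXiv:1307.5361 — 4 statements merged into one kernel-verified Lean document; each statement's English description precedes it below -/
import Mathlib

section
/- Let w(x) = x^{0.195}(1−x)^{0.195} on [0,1]. Then there exists a constant C > 0 such that for all sufficiently large x, ∫_1^x ψ(t) dt ≥ 0.99035 · x²/2 − C·x·(log x)². -/
open MeasureTheory Filter Set

/-- Chebyshev's function `ψ(x) = ∑_{p^m ≤ x} log p`, written as a sum of the
von Mangoldt function over integers up to `x`. -/
noncomputable def chebyshevPsi (x : ℝ) : ℝ :=
  ∑ n ∈ Finset.Icc 1 ⌊x⌋₊, ArithmeticFunction.vonMangoldt n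

namespace CP

def ms : Finset ℕ := {1,2,3,5,6,8,10,12,15,20,24,30,40,60,120}

def cf (m : ℕ) : ℤ :=
  if m = 1 then 60 else if m = 2 then -60 else if m = 3 then -60 else if m = 5 then -60
  else if m = 6 then 30 else if m = 8 then -30 else if m = 10 then 30 else if m = 12 then -40
  else if m = 15 then 28 else if m = 20 then -33 else if m = 24 then 45 else if m = 30 then -48
  else if m = 40 then 18 else if m = 60 then 16 else if m = 120 then -15 else 0

def F (j : ℕ) : ℤ := ∑ m ∈ ms, cf m * ((j / m : ℕ) : ℤ)

def S (q : ℕ) : ℤ := ∑ j ∈ Finset.range q, F j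

lemma F_period (j : ℕ) : F (j + 120) = F j := by
  simp only [F, ms]
  simp [cf]
  omega

lemma S_add (q : ℕ) : S (q + 120) = S q + S 120 := by
  induction q with
  | zero => simp [S]
  | succ n ih =>
    have h1 : S (n + 1 + 120) = S (n + 120) + F (n + 120) := by
      rw [show n + 1 + 120 = (n + 120) + 1 by ring]; exact Finset.sum_range_succ _ _
    have h2 : S (n + 1) = S n + F n := Finset.sum_range_succ _ _
    rw [h1, h2, ih, F_period]; ring

lemma S_small : ∀ q ∈ Finset.Icc 1 120, S q ≤ 60 * ((q : ℤ) - 1) := by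
  decide +kernel

lemma S_le (q : ℕ) (hq : 1 ≤ q) : S q ≤ 60 * ((q : ℤ) - 1) := by
  induction q using Nat.strong_induction_on with
  | _ q ih =>
    by_cases h : q ≤ 120
    · exact S_small q (Finset.mem_Icc.2 ⟨hq, h⟩)
    · obtain ⟨r, rfl⟩ : ∃ r, q = r + 120 := ⟨q - 120, by omega⟩
      have := ih r (by omega) (by omega)
      have h2 := S_small 120 (by simp)
      rw [S_add]; push_cast at *; linarith

lemma F_zero : F 0 = 0 := by decide

/-- sum over a full set of blocks -/
lemma sum_F_div (n : ℕ) (hn : 0 < n) (X : ℕ) :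
    ∑ t ∈ Finset.range X, F (t / n) = n * S (X / n) + (X % n : ℕ) * F (X / n) := by
  induction X with
  | zero => simp [S]
  | succ X ih =>
    rw [Finset.sum_range_succ, ih]
    by_cases h : n ∣ X + 1
    · have h1 : (X + 1) / n = X / n + 1 := Nat.succ_div_of_dvd h
      have h2 : (X + 1) % n = 0 := Nat.mod_eq_zero_of_dvd h
      have e1 := Nat.div_add_mod X n
      have e2 := Nat.div_add_mod (X + 1) n
      rw [h1, h2] at e2
      have e3 : X % n + 1 = n := by
        rw [mul_add] at e2; omega
      have h4 : S (X / n + 1) = S (X / n) + F (X / n) := Finset.sum_range_succ _ _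
      rw [h1, h2, h4]
      have e4 : ((X % n : ℕ) : ℤ) = n - 1 := by omega
      rw [e4]; push_cast; ring
    · have h1 : (X + 1) / n = X / n := Nat.succ_div_of_not_dvd h
      have e1 := Nat.div_add_mod X n
      have e2 := Nat.div_add_mod (X + 1) n
      rw [h1] at e2 ⊢
      have e3 : (X + 1) % n = X % n + 1 := by omega
      rw [e3]; push_cast; ring

lemma sum_F_div_le (n : ℕ) (hn : 0 < n) (X : ℕ) (hX : n ≤ X) :
    ∑ t ∈ Finset.range X, F (t / n) ≤ 60 * ((X : ℤ) - n) := by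
  rw [sum_F_div n hn X]
  have hq : 1 ≤ X / n := (Nat.one_le_div_iff hn).2 hX
  have h1 := S_le _ hq
  have h2 := S_le (X / n + 1) (by omega)
  have h4 : S (X / n + 1) = S (X / n) + F (X / n) := Finset.sum_range_succ _ _
  have e1 : (n : ℤ) * (X / n : ℕ) + (X % n : ℕ) = X := by exact_mod_cast Nat.div_add_mod X n
  have hr : ((X % n : ℕ) : ℤ) ≤ n := by exact_mod_cast (Nat.mod_lt X hn).le
  have hr0 : (0 : ℤ) ≤ ((X % n : ℕ) : ℤ) := by positivity
  set q : ℤ := ((X / n : ℕ) : ℤ)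
  set r : ℤ := ((X % n : ℕ) : ℤ)
  rw [h4, Nat.cast_succ] at h2
  change _ ≤ 60 * (q + 1 - 1) at h2
  have a1 := mul_le_mul_of_nonneg_left h1 (sub_nonneg.2 hr)
  have a2 := mul_le_mul_of_nonneg_left h2 hr0
  rw [← e1]
  nlinarith

/-- log factorial -/
noncomputable def T (k : ℕ) : ℝ := ∑ i ∈ Finset.Ioc 0 k, Real.log i

lemma T_succ (k : ℕ) : T (k + 1) = T k + Real.log ((k : ℝ) + 1) := by
  unfold T
  rw [Finset.sum_Ioc_succ_top (by omega)]; push_cast; rfl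

lemma tan_ineq (a b : ℝ) (ha : 0 ≤ a) (hb : 0 < b) :
    a * Real.log b ≤ a * Real.log a + b - a := by
  rcases ha.eq_or_lt with rfl | ha
  · simp; exact hb.le
  have h := Real.log_le_sub_one_of_pos (div_pos hb ha)
  rw [Real.log_div hb.ne' ha.ne'] at h
  have h2 := mul_le_mul_of_nonneg_left h ha.le
  have : a * (b / a - 1) = b - a := by field_simp
  linarith

lemma T_lower (k : ℕ) : k * Real.log k - k ≤ T k := by
  induction k with
  | zero => simp [T]
  | succ k ih =>
    rw [T_succ]
    have := tan_ineq k (k + 1) (by positivity) (by positivity)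
    push_cast; linarith

lemma T_upper (k : ℕ) : T k ≤ (k + 1) * Real.log (k + 1) - k := by
  induction k with
  | zero => simp [T]
  | succ k ih =>
    rw [T_succ]
    have := tan_ineq (k + 2) (k + 1) (by positivity) (by positivity)
    push_cast
    rw [show (k : ℝ) + 1 + 1 = k + 2 by ring]; linarith

lemma T_approx (t m : ℕ) (ht : 0 < t) (hm : 0 < m) :
    |T (t / m) - ((t / m : ℝ) * Real.log (t / m : ℝ) - t / m)| ≤ 1 + Real.log (t + 1) := by
  set k := t / m with hk
  set u : ℝ := (t : ℝ) / m with hu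
  have hm' : (0 : ℝ) < m := by exact_mod_cast hm
  have hu0 : 0 < u := by positivity
  have hku : (k : ℝ) ≤ u := Nat.cast_div_le
  have huk : u < k + 1 := by
    rw [hu, div_lt_iff₀ hm']
    have h2 := Nat.div_add_mod t m
    have h3 := Nat.mod_lt t hm
    have : t < (k + 1) * m := by rw [hk]; nlinarith
    exact_mod_cast this
  have hut : u ≤ t := div_le_self (by positivity) (by exact_mod_cast hm)
  have l1 : Real.log (k + 1) ≤ Real.log (t + 1) := Real.log_le_log (by positivity) (by linarith)
  have l2 : Real.log u ≤ Real.log (t + 1) := Real.log_le_log (by positivity) (by linarith)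
  have l0 : 0 ≤ Real.log ((k : ℝ) + 1) := Real.log_nonneg (by linarith [(Nat.cast_nonneg k : (0:ℝ) ≤ k)])
  have l00 : 0 ≤ Real.log ((t : ℝ) + 1) := l0.trans l1
  have a1 := tan_ineq u (k + 1) hu0.le (by positivity)
  have a2 := tan_ineq k u (by positivity) hu0
  have b1 := T_lower k
  have b2 := T_upper k
  have p1 : (k + 1 - u) * Real.log (k + 1) ≤ 1 * Real.log (k + 1) :=
    mul_le_mul_of_nonneg_right (by linarith) l0
  have p2 : (u - k) * Real.log u ≤ (u - k) * Real.log (t + 1) :=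
    mul_le_mul_of_nonneg_left l2 (by linarith)
  have p3 : (u - k) * Real.log (t + 1) ≤ 1 * Real.log (t + 1) :=
    mul_le_mul_of_nonneg_right (by linarith) l00
  rw [abs_le]
  constructor <;> linarith

open ArithmeticFunction in
lemma T_eq (k : ℕ) : T k = ∑ n ∈ Finset.Ioc 0 k, vonMangoldt n * ((k / n : ℕ) : ℝ) := by
  have h := sum_Ioc_mul_zeta_eq_sum vonMangoldt k
  rw [vonMangoldt_mul_zeta] at h
  rw [← h]; rfl

open ArithmeticFunction in
lemma T_eq' (k N : ℕ) (h : k ≤ N) :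
    T k = ∑ n ∈ Finset.Ioc 0 N, vonMangoldt n * ((k / n : ℕ) : ℝ) := by
  rw [T_eq]
  apply Finset.sum_subset (Finset.Ioc_subset_Ioc_right h)
  intro x hx hx2
  simp only [Finset.mem_Ioc] at hx hx2
  rw [Nat.div_eq_of_lt (by omega)]; simp

noncomputable def D (t : ℕ) : ℝ := ∑ m ∈ ms, (cf m : ℝ) * T (t / m)

open ArithmeticFunction in
lemma D_eq (t N : ℕ) (h : t ≤ N) :
    D t = ∑ n ∈ Finset.Ioc 0 N, vonMangoldt n * (F (t / n) : ℝ) := by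
  unfold D
  have : ∀ m ∈ ms, (cf m : ℝ) * T (t / m) =
      ∑ n ∈ Finset.Ioc 0 N, vonMangoldt n * ((cf m : ℝ) * ((t / n / m : ℕ) : ℝ)) := by
    intro m _
    rw [T_eq' (t / m) N ((Nat.div_le_self _ _).trans h), Finset.mul_sum]
    refine Finset.sum_congr rfl fun n _ => ?_
    rw [Nat.div_div_eq_div_mul, Nat.div_div_eq_div_mul, mul_comm m n]; ring
  rw [Finset.sum_congr rfl this, Finset.sum_comm]
  refine Finset.sum_congr rfl fun n _ => ?_
  rw [← Finset.mul_sum]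
  simp only [F, Int.cast_sum, Int.cast_mul, Int.cast_natCast]

lemma psi_sum (N : ℕ) : ∑ t ∈ Finset.range N, chebyshevPsi t =
    ∑ n ∈ Finset.Ioc 0 N, ArithmeticFunction.vonMangoldt n * ((N : ℝ) - n) := by
  induction N with
  | zero => simp
  | succ N ih =>
    rw [Finset.sum_range_succ, ih, Finset.sum_Ioc_succ_top (by omega)]
    simp only [chebyshevPsi, Nat.floor_natCast]
    rw [show Finset.Icc 1 N = Finset.Ioc 0 N by ext; simp; omega, ← Finset.sum_add_distrib]
    push_cast
    rw [sub_self, mul_zero, add_zero]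
    refine Finset.sum_congr rfl fun n _ => ?_
    ring

lemma D_sum_le (N : ℕ) : ∑ t ∈ Finset.range N, D t ≤ 60 * ∑ t ∈ Finset.range N, chebyshevPsi t := by
  rw [psi_sum, Finset.mul_sum,
    Finset.sum_congr rfl fun t ht => D_eq t N (Finset.mem_range.1 ht).le, Finset.sum_comm]
  refine Finset.sum_le_sum fun n hn => ?_
  rw [Finset.mem_Ioc] at hn
  rw [← Finset.mul_sum]
  have h := sum_F_div_le n hn.1 N hn.2
  have h' : ∑ t ∈ Finset.range N, (F (t / n) : ℝ) ≤ 60 * ((N : ℝ) - n) := by exact_mod_cast h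
  calc _ ≤ ArithmeticFunction.vonMangoldt n * (60 * ((N : ℝ) - n)) :=
        mul_le_mul_of_nonneg_left h' ArithmeticFunction.vonMangoldt_nonneg
    _ = _ := by ring

lemma log5 : 1.609 ≤ Real.log 5 := by
  have h : Real.log ((2:ℝ) ^ 65) ≤ Real.log ((5:ℝ) ^ 28) :=
    Real.log_le_log (by positivity) (by norm_num)
  rw [Real.log_pow, Real.log_pow] at h
  have := Real.log_two_gt_d9
  push_cast at h
  linarith

lemma main_sum (t : ℝ) (ht : 0 < t) :
    60 * 0.99035 * t ≤ ∑ m ∈ ms, (cf m : ℝ) * ((t / m : ℝ) * Real.log (t / m : ℝ) - t / m) := by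
  have e : ∀ m ∈ ms, (cf m : ℝ) * ((t / m : ℝ) * Real.log (t / m : ℝ) - t / m) =
      (t * Real.log t - t) * ((cf m : ℝ) / m) - t * ((cf m : ℝ) / m * Real.log m) := by
    intro m hm
    have : (m : ℝ) ≠ 0 := by
      rintro h
      have : m = 0 := by exact_mod_cast h
      subst this; revert hm; decide
    rw [Real.log_div ht.ne' this]; ring
  rw [Finset.sum_congr rfl e, Finset.sum_sub_distrib, ← Finset.mul_sum, ← Finset.mul_sum]
  have h0 : ∑ m ∈ ms, ((cf m : ℝ) / m) = 0 := by
    simp only [ms]; simp [cf]; norm_num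
  have h1 : ∑ m ∈ ms, ((cf m : ℝ) / m * Real.log m) ≤ -(60 * 0.99035) := by
    have l6 : Real.log 6 = Real.log 2 + Real.log 3 := by
      rw [← Real.log_mul (by norm_num) (by norm_num)]; norm_num
    have l8 : Real.log 8 = 3 * Real.log 2 := by
      rw [show (8:ℝ) = 2 ^ 3 by norm_num, Real.log_pow]; norm_num
    have l10 : Real.log 10 = Real.log 2 + Real.log 5 := by
      rw [← Real.log_mul (by norm_num) (by norm_num)]; norm_num
    have l12 : Real.log 12 = Real.log 2 + Real.log 6 := by
      rw [← Real.log_mul (by norm_num) (by norm_num)]; norm_num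
    have l15 : Real.log 15 = Real.log 3 + Real.log 5 := by
      rw [← Real.log_mul (by norm_num) (by norm_num)]; norm_num
    have l20 : Real.log 20 = Real.log 2 + Real.log 10 := by
      rw [← Real.log_mul (by norm_num) (by norm_num)]; norm_num
    have l24 : Real.log 24 = Real.log 2 + Real.log 12 := by
      rw [← Real.log_mul (by norm_num) (by norm_num)]; norm_num
    have l30 : Real.log 30 = Real.log 2 + Real.log 15 := by
      rw [← Real.log_mul (by norm_num) (by norm_num)]; norm_num
    have l40 : Real.log 40 = Real.log 2 + Real.log 20 := by
      rw [← Real.log_mul (by norm_num) (by norm_num)]; norm_num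
    have l60 : Real.log 60 = Real.log 2 + Real.log 30 := by
      rw [← Real.log_mul (by norm_num) (by norm_num)]; norm_num
    have l120 : Real.log 120 = Real.log 2 + Real.log 60 := by
      rw [← Real.log_mul (by norm_num) (by norm_num)]; norm_num
    have a2 := Real.log_two_gt_d9
    have a3 := Real.log_three_gt_d9
    have a5 := log5
    simp only [ms]; simp [cf]
    linarith
  rw [h0]
  nlinarith

noncomputable def K : ℝ := ∑ m ∈ ms, |(cf m : ℝ)|

lemma K_nonneg : 0 ≤ K := Finset.sum_nonneg fun _ _ => abs_nonneg _

lemma D_lower (t : ℕ) : 60 * 0.99035 * (t : ℝ) - K * (1 + Real.log (t + 1)) ≤ D t := by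
  rcases Nat.eq_zero_or_pos t with rfl | ht
  · have : D 0 = 0 := by simp [D, T]
    rw [this]; simp; exact K_nonneg
  have h := main_sum t (by exact_mod_cast ht)
  have h2 : ∑ m ∈ ms, (cf m : ℝ) * ((t / m : ℝ) * Real.log (t / m : ℝ) - t / m) - D t ≤
      K * (1 + Real.log (t + 1)) := by
    unfold D K
    rw [← Finset.sum_sub_distrib, Finset.sum_mul]
    refine Finset.sum_le_sum fun m hm => ?_
    have hm0 : 0 < m := by
      rcases Nat.eq_zero_or_pos m with rfl | h
      · revert hm; decide
      · exact h
    have := T_approx t m ht hm0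
    rw [← mul_sub]
    refine (le_abs_self _).trans ?_
    rw [abs_mul, abs_sub_comm]
    exact mul_le_mul_of_nonneg_left this (abs_nonneg _)
  linarith

lemma psi_sum_lower (N : ℕ) : 60 * 0.99035 * ((N : ℝ) * (N - 1) / 2) - K * N * (1 + Real.log (N + 1))
    ≤ 60 * ∑ t ∈ Finset.range N, chebyshevPsi t := by
  refine le_trans ?_ (D_sum_le N)
  have h : ∑ t ∈ Finset.range N, (60 * 0.99035 * (t : ℝ) - K * (1 + Real.log (N + 1))) ≤
      ∑ t ∈ Finset.range N, D t := by
    refine Finset.sum_le_sum fun t ht => le_trans ?_ (D_lower t)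
    have : (t : ℝ) ≤ N := by exact_mod_cast (Finset.mem_range.1 ht).le
    have : Real.log (t + 1) ≤ Real.log (N + 1) := Real.log_le_log (by positivity) (by linarith)
    have := mul_le_mul_of_nonneg_left this K_nonneg
    linarith
  refine le_trans (le_of_eq ?_) h
  rw [Finset.sum_sub_distrib, ← Finset.mul_sum]
  have : ∑ t ∈ Finset.range N, (t : ℝ) = (N : ℝ) * (N - 1) / 2 := by
    clear h
    induction N with
    | zero => simp
    | succ n ih => rw [Finset.sum_range_succ, ih]; push_cast; ring
  rw [this]; simp; ring

lemma psi_mono : Monotone chebyshevPsi := by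
  intro a b hab
  unfold chebyshevPsi
  exact Finset.sum_le_sum_of_subset_of_nonneg
    (Finset.Icc_subset_Icc_right (Nat.floor_mono hab))
    fun _ _ _ => ArithmeticFunction.vonMangoldt_nonneg

lemma psi_nonneg (x : ℝ) : 0 ≤ chebyshevPsi x :=
  Finset.sum_nonneg fun _ _ => ArithmeticFunction.vonMangoldt_nonneg

lemma int_lower (x : ℝ) (hx : 1 ≤ x) :
    ∑ t ∈ Finset.range ⌊x⌋₊, chebyshevPsi t ≤ ∫ t in (1:ℝ)..x, chebyshevPsi t := by
  have hN : 1 ≤ ⌊x⌋₊ := Nat.le_floor (by simpa using hx)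
  have hfl : (⌊x⌋₊ : ℝ) ≤ x := Nat.floor_le (by linarith)
  have h1 := MonotoneOn.sum_le_integral_Ico (f := chebyshevPsi) hN (psi_mono.monotoneOn _)
  have h2 : ∑ t ∈ Finset.range ⌊x⌋₊, chebyshevPsi t = ∑ t ∈ Finset.Ico 1 ⌊x⌋₊, chebyshevPsi t := by
    rw [Finset.range_eq_Ico, Finset.sum_eq_sum_Ico_succ_bot (by omega)]
    simp [chebyshevPsi]
  rw [h2]
  refine h1.trans ?_
  rw [Nat.cast_one]
  have i1 := psi_mono.intervalIntegrable (μ := volume) (a := (1:ℝ)) (b := (⌊x⌋₊ : ℝ))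
  have i2 := psi_mono.intervalIntegrable (μ := volume) (a := (⌊x⌋₊ : ℝ)) (b := x)
  rw [← intervalIntegral.integral_add_adjacent_intervals i1 i2]
  have := intervalIntegral.integral_nonneg (μ := volume) hfl fun t _ => psi_nonneg t
  linarith

end CP

theorem stmt1 (w : ℝ → ℝ)
    (hw : ∀ x ∈ Set.Icc (0:ℝ) 1, w x = x ^ (0.195:ℝ) * (1 - x) ^ (0.195:ℝ)) :
    ∃ C > 0, ∀ᶠ x : ℝ in atTop,
      0.99035 * (x ^ 2 / 2) - C * x * Real.log x ^ 2 ≤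
        ∫ t in (1:ℝ)..x, chebyshevPsi t := by
  refine ⟨3 * CP.K + 3, by linarith [CP.K_nonneg], ?_⟩
  filter_upwards [eventually_ge_atTop (3:ℝ)] with x hx
  have h1 := CP.int_lower x (by linarith)
  have h2 := CP.psi_sum_lower ⌊x⌋₊
  have hK := CP.K_nonneg
  have hfl : (⌊x⌋₊ : ℝ) ≤ x := Nat.floor_le (by linarith)
  have hfl2 : x < (⌊x⌋₊ : ℝ) + 1 := Nat.lt_floor_add_one x
  have hN0 : (0 : ℝ) ≤ (⌊x⌋₊ : ℝ) := by positivity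
  have l1 : 1 ≤ Real.log x := by
    have := Real.log_three_gt_d9
    have h3 := Real.log_le_log (by norm_num) hx
    linarith
  have l2 : Real.log ((⌊x⌋₊ : ℝ) + 1) ≤ 2 * Real.log x := by
    have : Real.log ((⌊x⌋₊ : ℝ) + 1) ≤ Real.log (x ^ 2) :=
      Real.log_le_log (by positivity) (by nlinarith)
    rwa [Real.log_pow] at this
  set N : ℝ := (⌊x⌋₊ : ℝ)
  set l := Real.log x
  have b1 : CP.K * N * (1 + Real.log (N + 1)) ≤ CP.K * x * (3 * l ^ 2) := by
    apply mul_le_mul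
    · exact mul_le_mul_of_nonneg_left hfl hK
    · nlinarith
    · have := Real.log_nonneg (show (1:ℝ) ≤ N + 1 by linarith)
      linarith
    · positivity
  have b2 : x ^ 2 - 3 * x ≤ N * (N - 1) := by nlinarith
  have b3 : x ≤ x * l ^ 2 :=
    le_mul_of_one_le_right (by linarith) (one_le_pow₀ l1)
  have b4 : 0 ≤ CP.K * (x * l ^ 2) := by positivity
  nlinarith
end

section
/- Let n ∈ ℕ and let p ∈ ℤ[x] be a polynomial of degree at most n with ∫_0^1 p(x) dx ≠ 0. Then lcm(1,2,…,n+1) · |∫_0^1 p(x) dx| ≥ 1, and consequently ψ(n+1) ≥ −log |∫_0^1 p(x) dx| ≥ −log max_{x ∈ [0,1]} |p(x)|. -/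
open MeasureTheory Filter Set

theorem stmt13_int (n : ℕ) (p : Polynomial ℤ) (hdeg : p.natDegree ≤ n) :
    ∃ z : ℤ, (z : ℝ) = (((Finset.Icc 1 (n+1)).lcm id : ℕ) : ℝ) *
      ∫ x in (0:ℝ)..1, Polynomial.aeval x p := by
  have h1 : ∀ x : ℝ, Polynomial.aeval x p
      = ∑ i ∈ Finset.range (n+1), (p.coeff i : ℝ) * x ^ i := by
    intro x
    rw [Polynomial.aeval_eq_sum_range' (Nat.lt_succ_of_le hdeg)]
    simp
  simp_rw [h1]
  rw [intervalIntegral.integral_finsetSum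
    (fun i _ => (by fun_prop : Continuous _).intervalIntegrable _ _), Finset.mul_sum]
  have h2 : ∀ i ∈ Finset.range (n+1), ∃ z : ℤ, (z : ℝ) =
      (((Finset.Icc 1 (n+1)).lcm id : ℕ) : ℝ) * ∫ x in (0:ℝ)..1, (p.coeff i : ℝ) * x ^ i := by
    intro i hi
    have hd : (i+1) ∣ (Finset.Icc 1 (n+1)).lcm id :=
      Finset.dvd_lcm (f := id) (b := i+1) (by simp at hi ⊢; omega)
    obtain ⟨c, hc⟩ := hd
    refine ⟨c * p.coeff i, ?_⟩
    rw [hc, intervalIntegral.integral_const_mul, integral_pow]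
    have : (i : ℝ) + 1 ≠ 0 := by positivity
    push_cast
    field_simp
    simp
  choose! f hf using h2
  refine ⟨∑ i ∈ Finset.range (n+1), f i, ?_⟩
  push_cast
  exact Finset.sum_congr rfl hf

theorem stmt13 (n : ℕ) (p : Polynomial ℤ) (hdeg : p.natDegree ≤ n)
    (I : ℝ) (hI : I = ∫ x in (0:ℝ)..1, Polynomial.aeval x p) (hI0 : I ≠ 0) :
    1 ≤ (((Finset.Icc 1 (n+1)).lcm id : ℕ) : ℝ) * |I| ∧
    -Real.log |I| ≤ chebyshevPsi (n+1) ∧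
    -Real.log (sSup ((fun x => |Polynomial.aeval x p|) '' Set.Icc (0:ℝ) 1)) ≤ -Real.log |I| := by
  have hpos : 0 < |I| := abs_pos.2 hI0
  have hL : 0 < (((Finset.Icc 1 (n+1)).lcm id : ℕ) : ℝ) := by
    exact_mod_cast Nat.lcmUpto_pos (n+1)
  have key : 1 ≤ (((Finset.Icc 1 (n+1)).lcm id : ℕ) : ℝ) * |I| := by
    obtain ⟨z, hz⟩ := stmt13_int n p hdeg
    rw [← hI] at hz
    have hz0 : z ≠ 0 := by
      rintro rfl
      have := mul_ne_zero hL.ne' hI0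
      rw [← hz] at this
      simp at this
    have h := congrArg abs hz
    rw [abs_mul, abs_of_pos hL] at h
    rw [← h]
    exact_mod_cast Int.one_le_abs hz0
  refine ⟨key, ?_, ?_⟩
  · have h1 : chebyshevPsi (n+1) = Real.log (((Finset.Icc 1 (n+1)).lcm id : ℕ) : ℝ) := by
      have := Chebyshev.psi_eq_log_lcmUpto (n+1)
      rw [Nat.lcmUpto] at this
      rw [← this]
      unfold chebyshevPsi Chebyshev.psi
      push_cast
      rfl
    rw [h1]
    have := Real.log_nonneg key
    rw [Real.log_mul hL.ne' hpos.ne'] at this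
    linarith
  · apply neg_le_neg
    apply Real.log_le_log hpos
    have hc : Continuous (fun x : ℝ => |Polynomial.aeval x p|) :=
      (Polynomial.continuous_aeval p).abs
    have hb : BddAbove ((fun x : ℝ => |Polynomial.aeval x p|) '' Set.Icc (0:ℝ) 1) :=
      (isCompact_Icc.image hc).bddAbove
    have := intervalIntegral.norm_integral_le_of_norm_le_const (a := (0:ℝ)) (b := 1)
      (f := fun x : ℝ => Polynomial.aeval x p)
      (C := sSup ((fun x : ℝ => |Polynomial.aeval x p|) '' Set.Icc (0:ℝ) 1)) (by
        intro x hx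
        rw [Set.uIoc_of_le zero_le_one] at hx
        exact le_csSup hb ⟨x, ⟨hx.1.le, hx.2⟩, rfl⟩)
    rw [← hI] at this
    simpa using this
end

section
/- Let (p_n)_{n ∈ ℕ} be a sequence of polynomials with p_n ∈ ℤ[x], deg p_n ≤ n, and ∫_0^1 p_n(x) dx ≠ 0 for every n. Then liminf_{n→∞} ψ(n+1)/n ≥ −log ( limsup_{n→∞} (max_{x ∈ [0,1]} |p_n(x)|)^{1/n} ). -/
open MeasureTheory Filter Set

lemma aux_int (q : Polynomial ℤ) (n : ℕ) (hd : q.natDegree ≤ n) :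
    ∃ z : ℤ, (Nat.lcmUpto (n+1) : ℝ) * (∫ x in (0:ℝ)..1, Polynomial.aeval x q) = z := by
  have h : (∫ x in (0:ℝ)..1, Polynomial.aeval x q)
      = ∑ i ∈ Finset.range (n+1), (q.coeff i : ℝ) * (1 / ((i:ℝ)+1)) := by
    have : ∀ x : ℝ, Polynomial.aeval x q = ∑ i ∈ Finset.range (n+1), (q.coeff i : ℝ) * x ^ i := by
      intro x
      rw [Polynomial.aeval_eq_sum_range' (Nat.lt_succ_of_le hd)]
      simp
    simp_rw [this]
    rw [intervalIntegral.integral_finsetSum]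
    · refine Finset.sum_congr rfl fun i _ => ?_
      rw [intervalIntegral.integral_const_mul, integral_pow]
      simp
    · intro i _
      exact (by fun_prop : Continuous fun x : ℝ => (q.coeff i : ℝ) * x ^ i).intervalIntegrable _ _
  refine ⟨∑ i ∈ Finset.range (n+1), q.coeff i * ((Nat.lcmUpto (n+1) / (i+1) : ℕ) : ℤ), ?_⟩
  rw [h, Finset.mul_sum, Int.cast_sum]
  refine Finset.sum_congr rfl fun i hi => ?_
  have hdvd : (i+1) ∣ Nat.lcmUpto (n+1) := by
    have := Finset.dvd_lcm (f := id) (s := Finset.Icc 1 (n+1)) (b := i+1)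
      (by simp at hi ⊢; omega)
    exact this
  rw [Int.cast_mul, Int.cast_natCast, Nat.cast_div hdvd (by positivity)]
  push_cast
  ring

lemma aux_psi (n : ℕ) : chebyshevPsi ((n:ℝ)+1) = Chebyshev.psi ((n+1 : ℕ) : ℝ) := by
  rw [chebyshevPsi, Chebyshev.psi]
  push_cast
  rfl

lemma aux_sup (q : Polynomial ℤ) (n : ℕ) (hd : q.natDegree ≤ n)
    (h0 : (∫ x in (0:ℝ)..1, Polynomial.aeval x q) ≠ 0) :
    Real.exp (-chebyshevPsi ((n:ℝ)+1)) ≤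
      sSup ((fun x => |Polynomial.aeval x q|) '' Set.Icc (0:ℝ) 1) := by
  obtain ⟨z, hz⟩ := aux_int q n hd
  have hpos : (0:ℝ) < Nat.lcmUpto (n+1) := by exact_mod_cast Nat.lcmUpto_pos (n+1)
  have hz0 : z ≠ 0 := by
    rintro rfl
    simp only [Int.cast_zero, mul_eq_zero] at hz
    rcases hz with hz | hz
    · exact hpos.ne' hz
    · exact h0 hz
  have hz1 : (1:ℝ) ≤ |(z:ℝ)| := by exact_mod_cast Int.one_le_abs hz0
  rw [← hz, abs_mul, abs_of_pos hpos] at hz1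
  rw [aux_psi, Chebyshev.psi_eq_log_lcmUpto, Real.exp_neg, Real.exp_log hpos]
  have hcont : Continuous fun x : ℝ => |Polynomial.aeval x q| := by
    have : Continuous fun x : ℝ => Polynomial.aeval x q := Polynomial.continuous_aeval q
    exact this.abs
  have hb : BddAbove ((fun x : ℝ => |Polynomial.aeval x q|) '' Set.Icc (0:ℝ) 1) :=
    (isCompact_Icc.image hcont).bddAbove
  have hI := intervalIntegral.norm_integral_le_of_norm_le_const (a := (0:ℝ)) (b := 1)
    (f := fun x : ℝ => Polynomial.aeval x q)
    (C := sSup ((fun x : ℝ => |Polynomial.aeval x q|) '' Set.Icc (0:ℝ) 1)) (by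
      intro x hx
      rw [Set.uIoc_of_le zero_le_one] at hx
      exact le_csSup hb ⟨x, Set.Ioc_subset_Icc_self hx, rfl⟩)
  simp only [sub_zero, abs_one, mul_one, Real.norm_eq_abs] at hI
  rw [inv_le_iff_one_le_mul₀' hpos]
  exact hz1.trans (mul_le_mul_of_nonneg_left hI hpos.le)

theorem stmt14 (p : ℕ → Polynomial ℤ) (hdeg : ∀ n, (p n).natDegree ≤ n)
    (hI0 : ∀ n, (∫ x in (0:ℝ)..1, Polynomial.aeval x (p n)) ≠ 0) :
    -Real.log (Filter.atTop.limsup (fun n : ℕ =>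
        (sSup ((fun x => |Polynomial.aeval x (p n)|) '' Set.Icc (0:ℝ) 1)) ^ ((1:ℝ)/n))) ≤
      Filter.atTop.liminf (fun n : ℕ => chebyshevPsi (n+1) / n) := by
  set a : ℕ → ℝ := fun n : ℕ =>
        (sSup ((fun x : ℝ => |Polynomial.aeval x (p n)|) '' Set.Icc (0:ℝ) 1)) ^ ((1:ℝ)/n) with ha
  set u : ℕ → ℝ := fun n : ℕ => chebyshevPsi (n+1) / n with hu
  have hu0 : ∀ n, 0 ≤ u n := fun n => by
    simp only [hu, aux_psi]
    exact div_nonneg (Chebyshev.psi_nonneg _) (Nat.cast_nonneg _)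
  obtain ⟨C, hC⟩ : ∃ C : ℝ, ∀ n, u n ≤ C := by
    refine ⟨(Real.log 4 + 4) * 2, fun n => ?_⟩
    have hl : 0 ≤ Real.log 4 := Real.log_nonneg (by norm_num)
    rcases Nat.eq_zero_or_pos n with rfl | hn
    · simp only [hu, Nat.cast_zero, div_zero]; positivity
    · have hn' : (1:ℝ) ≤ n := by exact_mod_cast hn
      simp only [hu, aux_psi]
      rw [div_le_iff₀ (by linarith)]
      have := Chebyshev.psi_le_const_mul_self (x := ((n+1:ℕ):ℝ)) (by positivity)
      push_cast at this ⊢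
      nlinarith
  have hcob : IsCoboundedUnder (· ≥ ·) atTop u :=
    (isBoundedUnder_of ⟨C, hC⟩ : IsBoundedUnder (· ≤ ·) atTop u).isCoboundedUnder_ge
  have hau : ∀ n, 0 < n → Real.exp (-u n) ≤ a n := by
    intro n hn
    have h := Real.rpow_le_rpow (Real.exp_nonneg _) (aux_sup (p n) n (hdeg n) (hI0 n))
      (by positivity : (0:ℝ) ≤ 1 / n)
    rw [← Real.exp_mul] at h
    convert h using 2
    simp only [hu]; ring
  by_cases hb : IsBoundedUnder (· ≤ ·) atTop a
  · have hL : 0 < limsup a atTop := by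
      refine lt_of_lt_of_le (Real.exp_pos (-C)) ?_
      refine le_limsup_of_frequently_le (Eventually.frequently ?_) hb
      filter_upwards [eventually_gt_atTop 0] with n hn
      exact (Real.exp_le_exp.2 (neg_le_neg (hC n))).trans (hau n hn)
    refine le_of_forall_lt_imp_le_of_dense fun b hbL => ?_
    have h1 : limsup a atTop < Real.exp (-b) := by
      rw [← Real.log_lt_iff_lt_exp hL]; linarith
    refine le_liminf_of_le hcob ?_
    filter_upwards [eventually_lt_of_limsup_lt h1 hb, eventually_gt_atTop 0] with n h2 hn
    have := Real.exp_lt_exp.1 ((hau n hn).trans_lt h2)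
    linarith
  · have : limsup a atTop = 0 := by
      rw [limsup_eq]
      have : {c : ℝ | ∀ᶠ n in atTop, a n ≤ c} = ∅ := by
        ext c
        simp only [mem_setOf_eq, mem_empty_iff_false, iff_false]
        intro h
        exact hb ⟨c, h⟩
      rw [this, Real.sInf_empty]
    rw [this, Real.log_zero, neg_zero]
    exact le_liminf_of_le hcob (Eventually.of_forall hu0)
end

section
/- Let Q_1,…,Q_k ∈ ℤ[x] be nonzero polynomials with deg Q_i = m_i, let α_1,…,α_k > 0, let n ≥ 2, and set N := 2 ∑_{i=1}^k m_i ⌈α_i(n−1)⌉ and Δ̃(x_1,…,x_n) := ∏_{j=1}^n ∏_{i=1}^k (Q_i(x_j))^{2⌈α_i(n−1)⌉} · ∏_{1 ≤ i < j ≤ n} (x_i−x_j)². Then ∏_{l=n+N}^{2n−1+N} lcm(1,…,l) · ∫_{[0,1]^n} Δ̃(x_1,…,x_n) dx_1 … dx_n ≥ 1, and consequently ∑_{l=n+N}^{2n−1+N} ψ(l) ≥ −log max_{(x_1,…,x_n) ∈ [0,1]^n} Δ̃(x_1,…,x_n). -/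
open MeasureTheory Filter Set

lemma aux_int1 (R : Polynomial ℤ) (L : ℕ) (hR : R.natDegree < L) :
    ∃ z : ℤ, (((Finset.Icc 1 L).lcm id : ℕ) : ℝ) *
      ∫ x in Set.Icc (0:ℝ) 1, Polynomial.aeval x R = z := by
  have h1 : ∫ x in Set.Icc (0:ℝ) 1, Polynomial.aeval x R =
      ∑ i ∈ Finset.range (R.natDegree + 1), (R.coeff i : ℝ) * (1 / ((i:ℝ) + 1)) := by
    rw [integral_Icc_eq_integral_Ioc, ← intervalIntegral.integral_of_le zero_le_one]
    simp_rw [Polynomial.aeval_eq_sum_range, zsmul_eq_mul]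
    rw [intervalIntegral.integral_finsetSum]
    · refine Finset.sum_congr rfl fun i _ => ?_
      rw [intervalIntegral.integral_const_mul, integral_pow]
      simp
    · intro i _
      exact Continuous.intervalIntegrable (by fun_prop) _ _
  have h2 : ∀ i ∈ Finset.range (R.natDegree + 1), (i + 1) ∣ (Finset.Icc 1 L).lcm id := by
    intro i hi
    have : i + 1 ∈ Finset.Icc 1 L := by
      simp at hi ⊢; omega
    exact Finset.dvd_lcm (f := id) this
  refine ⟨∑ i ∈ Finset.range (R.natDegree + 1),
    R.coeff i * (((Finset.Icc 1 L).lcm id / (i + 1) : ℕ) : ℤ), ?_⟩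
  rw [h1, Finset.mul_sum]
  rw [Int.cast_sum]
  refine Finset.sum_congr rfl fun i hi => ?_
  rw [Int.cast_mul, Int.cast_natCast]
  have h3 : (i:ℝ) + 1 ≠ 0 := by positivity
  have h4 := Nat.div_mul_cancel (h2 i hi)
  have h5 : ((((Finset.Icc 1 L).lcm id / (i + 1) : ℕ) : ℝ)) * ((i:ℝ) + 1) =
      (((Finset.Icc 1 L).lcm id : ℕ) : ℝ) := by exact_mod_cast h4
  rw [← h5]
  field_simp

lemma aux_vdm (n : ℕ) (x : Fin n → ℝ) :
    ∏ q ∈ Finset.univ.filter (fun q : Fin n × Fin n => q.1 < q.2), (x q.1 - x q.2) ^ 2 =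
      (Matrix.vandermonde x).det ^ 2 := by
  rw [Matrix.det_vandermonde, Finset.prod_filter, ← Finset.univ_product_univ,
    Finset.prod_product, ← Finset.prod_pow]
  refine Finset.prod_congr rfl fun i _ => ?_
  rw [← Finset.prod_filter, ← Finset.prod_pow]
  refine Finset.prod_congr (by ext j; simp) fun j _ => by ring

lemma aux_expand (n : ℕ) (P : Polynomial ℤ) (x : Fin n → ℝ) :
    (∏ j, Polynomial.aeval (x j) P) * (Matrix.vandermonde x).det ^ 2 =
    ∑ σ : Equiv.Perm (Fin n), ∑ τ : Equiv.Perm (Fin n),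
      ((((Equiv.Perm.sign σ : ℤˣ) : ℤ) * ((Equiv.Perm.sign τ : ℤˣ) : ℤ) : ℤ) : ℝ) *
        ∏ j, Polynomial.aeval (x j) (P * Polynomial.X ^ ((σ j : ℕ) + (τ j : ℕ))) := by
  rw [← Matrix.det_transpose, sq, Matrix.det_apply', Finset.sum_mul_sum, Finset.mul_sum]
  refine Finset.sum_congr rfl fun σ _ => ?_
  rw [Finset.mul_sum]
  refine Finset.sum_congr rfl fun τ _ => ?_
  simp only [Matrix.transpose_apply, Matrix.vandermonde_apply, map_mul, map_pow,
    Polynomial.aeval_X, Finset.prod_mul_distrib, pow_add]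
  push_cast
  ring

lemma aux_integer (n N : ℕ) (hn : 0 < n) (P : Polynomial ℤ) (hP : P.natDegree ≤ N) :
    ∃ z : ℤ, ((∏ l ∈ Finset.Icc (n + N) (2*n - 1 + N), (Finset.Icc 1 l).lcm id : ℕ) : ℝ) *
      ∫ x in (Set.univ.pi fun _ : Fin n => Set.Icc (0:ℝ) 1),
        (∏ j, Polynomial.aeval (x j) P) * (Matrix.vandermonde x).det ^ 2 = z := by
  have hD : ∏ l ∈ Finset.Icc (n + N) (2*n - 1 + N), (Finset.Icc 1 l).lcm id =
      ∏ j : Fin n, (Finset.Icc 1 (n + N + j)).lcm id := by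
    rw [Fin.prod_univ_eq_prod_range (fun j => (Finset.Icc 1 (n + N + j)).lcm id) n]
    have : Finset.Icc (n + N) (2*n - 1 + N) = Finset.Ico (n + N) (n + N + n) := by
      ext l; simp; omega
    rw [this, Finset.prod_Ico_eq_prod_range]
    simp
  simp_rw [aux_expand]
  have hint : ∀ f : (Fin n → ℝ) → ℝ, Continuous f →
      IntegrableOn f (Set.univ.pi fun _ : Fin n => Set.Icc (0:ℝ) 1) := fun f hf =>
    hf.continuousOn.integrableOn_compact (isCompact_univ_pi fun _ => isCompact_Icc)
  rw [integral_finsetSum _ fun σ _ => hint _ (by fun_prop)]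
  have key : ∀ σ τ : Equiv.Perm (Fin n), ∃ z : ℤ,
      ((∏ l ∈ Finset.Icc (n + N) (2*n - 1 + N), (Finset.Icc 1 l).lcm id : ℕ) : ℝ) *
      ∫ x in (Set.univ.pi fun _ : Fin n => Set.Icc (0:ℝ) 1),
        ((((Equiv.Perm.sign σ : ℤˣ) : ℤ) * ((Equiv.Perm.sign τ : ℤˣ) : ℤ) : ℤ) : ℝ) *
        ∏ j, Polynomial.aeval (x j) (P * Polynomial.X ^ ((σ j : ℕ) + (τ j : ℕ))) = z := by
    intro σ τ
    have h1 : ∀ j : Fin n, ∃ z : ℤ, (((Finset.Icc 1 (n + N + σ j)).lcm id : ℕ) : ℝ) *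
      ∫ x in Set.Icc (0:ℝ) 1, 
        Polynomial.aeval x (P * Polynomial.X ^ ((σ j : ℕ) + (τ j : ℕ))) = z := by
      intro j
      apply aux_int1
      have := Polynomial.natDegree_mul_le (p := P)
        (q := Polynomial.X ^ ((σ j : ℕ) + (τ j : ℕ)))
      rw [Polynomial.natDegree_X_pow] at this
      have := (τ j).isLt
      omega
    choose z hz using h1
    refine ⟨((Equiv.Perm.sign σ : ℤˣ) : ℤ) * ((Equiv.Perm.sign τ : ℤˣ) : ℤ) * ∏ j, z j, ?_⟩
    rw [integral_const_mul, volume_pi, Measure.restrict_pi_pi,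
      integral_fintype_prod_eq_prod (fun j x =>
        Polynomial.aeval x (P * Polynomial.X ^ ((σ j : ℕ) + (τ j : ℕ))))]
    rw [hD, ← Equiv.prod_comp σ]
    push_cast
    simp_rw [← hz]
    rw [Finset.prod_mul_distrib]
    ring
  choose z hz using key
  refine ⟨∑ σ, ∑ τ, z σ τ, ?_⟩
  rw [Finset.mul_sum]
  push_cast
  refine Finset.sum_congr rfl fun σ _ => ?_
  rw [integral_finsetSum _ fun τ _ => hint _ (by fun_prop), Finset.mul_sum]
  refine Finset.sum_congr rfl fun τ _ => ?_
  exact_mod_cast hz σ τ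

lemma aux_pos (n : ℕ) (P : Polynomial ℤ) (hP : P ≠ 0) (f : (Fin n → ℝ) → ℝ)
    (hf : ∀ x, f x = (∏ j, Polynomial.aeval (x j) P) * (Matrix.vandermonde x).det ^ 2)
    (h0 : ∀ x, 0 ≤ f x) (hc : Continuous f) :
    0 < ∫ x in (Set.univ.pi fun _ : Fin n => Set.Icc (0:ℝ) 1), f x := by
  rw [setIntegral_pos_iff_support_of_nonneg_ae (Eventually.of_forall h0)
    (hc.continuousOn.integrableOn_compact (isCompact_univ_pi fun _ => isCompact_Icc))]
  have hinf : (Set.Ioo (0:ℝ) 1 \ (P.rootSet ℝ)).Infinite :=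
    (Set.Ioo_infinite zero_lt_one).sdiff (P.rootSet_finite ℝ)
  let e := hinf.natEmbedding
  let y : Fin n → ℝ := fun i => e i
  have hy : y ∈ Function.support f ∩ (Set.univ.pi fun _ : Fin n => Set.Ioo (0:ℝ) 1) := by
    refine ⟨?_, fun i _ => (e i).2.1⟩
    rw [Function.mem_support, hf]
    refine mul_ne_zero (Finset.prod_ne_zero_iff.2 fun j _ h => ?_) (pow_ne_zero _ ?_)
    · exact (e j).2.2 (by rw [Polynomial.mem_rootSet]; exact ⟨hP, h⟩)
    · rw [Matrix.det_vandermonde_ne_zero_iff]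
      intro i j hij
      exact Fin.ext (e.injective (Subtype.ext hij))
  have ho : IsOpen (Function.support f ∩ (Set.univ.pi fun _ : Fin n => Set.Ioo (0:ℝ) 1)) :=
    hc.isOpen_support.inter (isOpen_set_pi Set.finite_univ fun _ _ => isOpen_Ioo)
  refine (ho.measure_pos volume ⟨y, hy⟩).trans_le (measure_mono ?_)
  exact Set.inter_subset_inter_right _ (Set.pi_mono fun _ _ => Set.Ioo_subset_Icc_self)

theorem stmt15 (k : ℕ) (hk : 0 < k) (Q : Fin k → Polynomial ℤ) (m : Fin k → ℕ)
    (hQ : ∀ i, Q i ≠ 0) (hdeg : ∀ i, (Q i).natDegree = m i)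
    (α : Fin k → ℝ) (hα : ∀ i, 0 < α i) (n : ℕ) (hn : 2 ≤ n)
    (N : ℕ) (hN : N = 2 * ∑ i, m i * (⌈α i * ((n:ℝ) - 1)⌉).toNat)
    (Δ : (Fin n → ℝ) → ℝ)
    (hΔ : ∀ x, Δ x =
      (∏ j, ∏ i, (Polynomial.aeval (x j) (Q i)) ^ (2 * (⌈α i * ((n:ℝ) - 1)⌉).toNat)) *
        ∏ q ∈ Finset.univ.filter (fun q : Fin n × Fin n => q.1 < q.2), (x q.1 - x q.2) ^ 2) :
    1 ≤ ((∏ l ∈ Finset.Icc (n + N) (2*n - 1 + N), (Finset.Icc 1 l).lcm id : ℕ) : ℝ) *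
        ∫ x in (Set.univ.pi fun _ : Fin n => Set.Icc (0:ℝ) 1), Δ x ∧
    -Real.log (sSup (Δ '' (Set.univ.pi fun _ : Fin n => Set.Icc (0:ℝ) 1))) ≤
      ∑ l ∈ Finset.Icc (n + N) (2*n - 1 + N), chebyshevPsi l := by
  have h0 : ∀ x, 0 ≤ Δ x := by
    intro x
    rw [hΔ]
    refine mul_nonneg (Finset.prod_nonneg fun j _ => Finset.prod_nonneg fun i _ => ?_)
      (Finset.prod_nonneg fun q _ => sq_nonneg _)
    exact (even_two_mul _).pow_nonneg _
  have hc : Continuous Δ := by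
    rw [funext hΔ]
    fun_prop
  set c : Fin k → ℕ := fun i => (⌈α i * ((n:ℝ) - 1)⌉).toNat with hcdef
  let P : Polynomial ℤ := ∏ i, Q i ^ (2 * c i)
  have hP : P ≠ 0 := Finset.prod_ne_zero_iff.2 fun i _ => pow_ne_zero _ (hQ i)
  have hPd : P.natDegree ≤ N := by
    refine (Polynomial.natDegree_prod_le _ _).trans ?_
    rw [hN, Finset.mul_sum]
    refine Finset.sum_le_sum fun i _ => ?_
    refine Polynomial.natDegree_pow_le.trans ?_
    rw [hdeg]
    apply le_of_eq
    ring
  have hf : ∀ x, Δ x =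
      (∏ j, Polynomial.aeval (x j) P) * (Matrix.vandermonde x).det ^ 2 := by
    intro x
    rw [hΔ, aux_vdm]
    simp [P, c, map_prod]
  have hpos := aux_pos n P hP Δ hf h0 hc
  have hlpos : ∀ l, 0 < (Finset.Icc 1 l).lcm id := fun l => Nat.lcmUpto_pos l
  have hDpos : (0:ℝ) <
      ((∏ l ∈ Finset.Icc (n + N) (2*n - 1 + N), (Finset.Icc 1 l).lcm id : ℕ) : ℝ) := by
    exact_mod_cast Finset.prod_pos fun l _ => hlpos l
  have h1 : 1 ≤ ((∏ l ∈ Finset.Icc (n + N) (2*n - 1 + N), (Finset.Icc 1 l).lcm id : ℕ) : ℝ) *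
        ∫ x in (Set.univ.pi fun _ : Fin n => Set.Icc (0:ℝ) 1), Δ x := by
    obtain ⟨z, hz⟩ := aux_integer n N (by omega) P hPd
    simp_rw [← hf] at hz
    have := mul_pos hDpos hpos
    rw [hz] at this ⊢
    exact_mod_cast this
  refine ⟨h1, ?_⟩
  have hcomp : IsCompact (Set.univ.pi fun _ : Fin n => Set.Icc (0:ℝ) 1) :=
    isCompact_univ_pi fun _ => isCompact_Icc
  have hle : ∫ x in (Set.univ.pi fun _ : Fin n => Set.Icc (0:ℝ) 1), Δ x ≤
      sSup (Δ '' (Set.univ.pi fun _ : Fin n => Set.Icc (0:ℝ) 1)) := by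
    have hvol : volume (Set.univ.pi fun _ : Fin n => Set.Icc (0:ℝ) 1) = 1 := by
      rw [volume_pi_pi]; simp
    have := setIntegral_mono_on (μ := volume) (s := Set.univ.pi fun _ : Fin n => Set.Icc (0:ℝ) 1)
      (f := Δ) (g := fun _ => sSup (Δ '' (Set.univ.pi fun _ : Fin n => Set.Icc (0:ℝ) 1)))
      (hc.continuousOn.integrableOn_compact hcomp)
      (continuousOn_const.integrableOn_compact hcomp)
      hcomp.measurableSet
      (fun x hx => le_csSup (hcomp.bddAbove_image hc.continuousOn) ⟨x, hx, rfl⟩)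
    rwa [setIntegral_const, Measure.real, hvol, ENNReal.toReal_one, one_smul] at this
  have hMpos := hpos.trans_le hle
  have h2 := h1.trans (mul_le_mul_of_nonneg_left hle hDpos.le)
  have h3 := Real.log_nonneg h2
  rw [Real.log_mul hDpos.ne' hMpos.ne'] at h3
  have h4 : Real.log ((∏ l ∈ Finset.Icc (n + N) (2*n - 1 + N), (Finset.Icc 1 l).lcm id : ℕ) : ℝ)
      = ∑ l ∈ Finset.Icc (n + N) (2*n - 1 + N), chebyshevPsi l := by
    rw [Nat.cast_prod, Real.log_prod fun l _ => by exact_mod_cast (hlpos l).ne']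
    refine Finset.sum_congr rfl fun l _ => ?_
    exact (Chebyshev.psi_eq_log_lcmUpto l).symm
  linarith
end
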